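/- Let ρ be a sublinear operator on 𝒳 that is continuous from above. Then for every linear functional L : 𝒳 → ℝ dominated by ρ, there exists a countably additive probability measure P on (Ω, F) such that L(X) = ∫ X dP for all X ∈ 𝒳. -/

import Mathlib

open MeasureTheory Filter Topology
open scoped ENNReal

/-- `X` belongs to the space `𝒳` of bounded measurable real-valued functions on `Ω`. -/
def MemX {Ω : Type*} [MeasurableSpace Ω] (X : Ω → ℝ) : Prop :=
  Measurable X ∧ ∃ M : ℝ, ∀ ω, |X ω| ≤ M

/-- A sublinear operator on `𝒳`: monotone, constant preserving, subadditive and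
positively homogeneous. -/
def IsSublinearOp {Ω : Type*} [MeasurableSpace Ω] (ρ : (Ω → ℝ) → ℝ) : Prop :=
  (∀ X Y : Ω → ℝ, MemX X → MemX Y → (∀ ω, Y ω ≤ X ω) → ρ Y ≤ ρ X) ∧
  (∀ c : ℝ, ρ (fun _ => c) = c) ∧
  (∀ X Y : Ω → ℝ, MemX X → MemX Y → ρ (X + Y) ≤ ρ X + ρ Y) ∧
  (∀ c : ℝ, 0 ≤ c → ∀ X : Ω → ℝ, MemX X → ρ (c • X) = c * ρ X)

/-- A linear functional on `𝒳`. -/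
def IsLinearOp {Ω : Type*} [MeasurableSpace Ω] (L : (Ω → ℝ) → ℝ) : Prop :=
  (∀ X Y : Ω → ℝ, MemX X → MemX Y → L (X + Y) = L X + L Y) ∧
  (∀ (c : ℝ) (X : Ω → ℝ), MemX X → L (c • X) = c * L X)

/-- `L` is dominated by `ρ` on `𝒳`. -/
def Dominated {Ω : Type*} [MeasurableSpace Ω] (L ρ : (Ω → ℝ) → ℝ) : Prop :=
  ∀ X : Ω → ℝ, MemX X → L X ≤ ρ X

/-- The conjugate operator `E_ῡ[X] := -E_υ[-X]`. -/
def conjOp {Ω : Type*} (ρ : (Ω → ℝ) → ℝ) : (Ω → ℝ) → ℝ := fun X => -ρ (-X)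

/-- The set `𝒳_α` of test functions at significance level `α`. -/
def testSet {Ω : Type*} [MeasurableSpace Ω] (Emu : (Ω → ℝ) → ℝ) (α : ℝ) : Set (Ω → ℝ) :=
  {X | MemX X ∧ (∀ ω, 0 ≤ X ω ∧ X ω ≤ 1) ∧ Emu X ≤ α}

/-- A sublinear operator `ρ` on `𝒳` is continuous from above: `ρ(X_n) ↓ 0` whenever
`X_n ∈ 𝒳` and `X_n ↓ 0` pointwise. -/
def ContFromAbove {Ω : Type*} [MeasurableSpace Ω] (ρ : (Ω → ℝ) → ℝ) : Prop :=
  ∀ X : ℕ → Ω → ℝ, (∀ n, MemX (X n)) → (∀ ω, Antitone fun n => X n ω) →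
    (∀ ω, Tendsto (fun n => X n ω) atTop (𝓝 0)) →
    Tendsto (fun n => ρ (X n)) atTop (𝓝 0)

/-!
A linear functional lying below a monotone, constant preserving functional is a finitely additive
expectation, and it inherits continuity from above by squeezing. On indicators of measurable sets
such an expectation is therefore a finite additive content continuous at `∅`, i.e. a probability
measure. Two expectations that agree on indicators agree on simple functions by linearity, and on
all of `𝒳` because simple functions are uniformly dense there and expectations are contractive.
-/

section

variable {Ω : Type*} [MeasurableSpace Ω] {X Y : Ω → ℝ} {L L' ρ : (Ω → ℝ) → ℝ}

namespace MemX

protected lemma const (c : ℝ) : MemX fun _ : Ω => c :=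
  ⟨measurable_const, |c|, fun _ => le_rfl⟩

protected lemma indicator_one {A : Set Ω} (hA : MeasurableSet A) : MemX (A.indicator 1) :=
  ⟨measurable_one.indicator hA, 1, fun ω => by by_cases hω : ω ∈ A <;> simp [hω]⟩

protected lemma simpleFunc (f : SimpleFunc Ω ℝ) : MemX f :=
  ⟨f.measurable, f.exists_forall_norm_le⟩

protected lemma add (hX : MemX X) (hY : MemX Y) : MemX (X + Y) := by
  obtain ⟨hXm, M, hM⟩ := hX
  obtain ⟨hYm, N, hN⟩ := hY
  exact ⟨hXm.add hYm, M + N, fun ω => (abs_add_le _ _).trans (add_le_add (hM ω) (hN ω))⟩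

protected lemma const_smul (c : ℝ) (hX : MemX X) : MemX (c • X) := by
  obtain ⟨hXm, M, hM⟩ := hX
  refine ⟨hXm.const_smul c, |c| * M, fun ω => ?_⟩
  rw [Pi.smul_apply, smul_eq_mul, abs_mul]
  gcongr
  exact hM ω

protected lemma neg (hX : MemX X) : MemX (-X) := by
  simpa only [neg_one_smul] using hX.const_smul (-1)

protected lemma sub (hX : MemX X) (hY : MemX Y) : MemX (X - Y) := by
  simpa only [sub_eq_add_neg] using hX.add hY.neg

protected lemma integrable (hX : MemX X) (P : Measure Ω) [IsFiniteMeasure P] :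
    Integrable X P := by
  obtain ⟨hXm, M, hM⟩ := hX
  exact .of_bound hXm.aestronglyMeasurable M (.of_forall hM)

lemma exists_simpleFunc_abs_sub_le (hX : MemX X) {ε : ℝ} (hε : 0 < ε) :
    ∃ f : SimpleFunc Ω ℝ, ∀ ω, |X ω - f ω| ≤ ε := by
  obtain ⟨hXm, M, hM⟩ := hX
  have finite_range : (Set.range fun ω => ⌊X ω / ε⌋).Finite := by
    refine (Set.finite_Icc ⌊-M / ε⌋ ⌊M / ε⌋).subset (Set.range_subset_iff.2 fun ω => ?_)
    obtain ⟨hlower, hupper⟩ := abs_le.1 (hM ω)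
    exact ⟨by gcongr, by gcongr⟩
  let k : SimpleFunc Ω ℤ :=
    ⟨fun ω => ⌊X ω / ε⌋, fun n => (hXm.div_const ε).floor (measurableSet_singleton n),
      finite_range⟩
  refine ⟨k.map fun n : ℤ => n * ε, fun ω => ?_⟩
  have remainder : X ω - ⌊X ω / ε⌋ * ε = Int.fract (X ω / ε) * ε := by
    rw [Int.fract, sub_mul, div_mul_cancel₀ _ hε.ne']
  calc |X ω - ⌊X ω / ε⌋ * ε| = Int.fract (X ω / ε) * ε := by
        rw [remainder, abs_of_nonneg (mul_nonneg (Int.fract_nonneg _) hε.le)]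
    _ ≤ 1 * ε := by gcongr; exact (Int.fract_lt_one _).le
    _ = ε := one_mul ε

end MemX

namespace IsLinearOp

lemma map_neg (hL : IsLinearOp L) (hX : MemX X) : L (-X) = -L X := by
  simpa only [neg_one_smul, neg_one_mul] using hL.2 (-1) X hX

lemma map_sub (hL : IsLinearOp L) (hX : MemX X) (hY : MemX Y) : L (X - Y) = L X - L Y := by
  rw [sub_eq_add_neg, hL.1 _ _ hX hY.neg, hL.map_neg hY, ← sub_eq_add_neg]

lemma map_zero (hL : IsLinearOp L) : L 0 = 0 := by
  simpa only [zero_smul, zero_mul] using hL.2 0 _ (MemX.const 0)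

lemma map_indicator_union (hL : IsLinearOp L) {A B : Set Ω} (hA : MeasurableSet A)
    (hB : MeasurableSet B) (hAB : Disjoint A B) :
    L ((A ∪ B).indicator 1) = L (A.indicator 1) + L (B.indicator 1) := by
  rw [Set.indicator_union_of_disjoint hAB]
  exact hL.1 _ _ (.indicator_one hA) (.indicator_one hB)

lemma eq_simpleFunc_of_eq_indicator (hL : IsLinearOp L) (hL' : IsLinearOp L')
    (h : ∀ A, MeasurableSet A → L (A.indicator 1) = L' (A.indicator 1)) (f : SimpleFunc Ω ℝ) :
    L f = L' f := by
  induction f using SimpleFunc.induction with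
  | @const c A hA =>
    have coe_eq : ⇑(SimpleFunc.piecewise A hA (.const Ω c) (.const Ω 0)) =
        c • A.indicator (1 : Ω → ℝ) := by
      ext ω
      by_cases hω : ω ∈ A <;> simp [hω]
    rw [coe_eq, hL.2 _ _ (.indicator_one hA), hL'.2 _ _ (.indicator_one hA), h A hA]
  | @add f g _ hf hg =>
    rw [SimpleFunc.coe_add, hL.1 _ _ (.simpleFunc f) (.simpleFunc g),
      hL'.1 _ _ (.simpleFunc f) (.simpleFunc g), hf, hg]

end IsLinearOp

/-- A linear expectation on `𝒳`: a positive linear functional of total mass one, i.e. integration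
against a finitely additive probability. -/
structure IsLinearExpectation (L : (Ω → ℝ) → ℝ) : Prop where
  isLinearOp : IsLinearOp L
  nonneg : ∀ X, MemX X → (∀ ω, 0 ≤ X ω) → 0 ≤ L X
  map_one : L 1 = 1

lemma isLinearExpectation_integral (P : Measure Ω) [IsProbabilityMeasure P] :
    IsLinearExpectation fun X => ∫ ω, X ω ∂P where
  isLinearOp := ⟨fun _ _ hX hY => integral_add (hX.integrable P) (hY.integrable P),
    fun c X _ => integral_const_mul c X⟩
  nonneg _ _ hX := integral_nonneg hX
  map_one := by simp

lemma IsLinearOp.isLinearExpectation_of_dominated (hL : IsLinearOp L) (hdom : Dominated L ρ)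
    (hmono : ∀ X Y, MemX X → MemX Y → (∀ ω, Y ω ≤ X ω) → ρ Y ≤ ρ X)
    (hconst : ∀ c : ℝ, ρ (fun _ => c) = c) : IsLinearExpectation L where
  isLinearOp := hL
  nonneg X hX hX0 := by
    have : -L X ≤ 0 :=
      calc -L X = L (-X) := (hL.map_neg hX).symm
        _ ≤ ρ (-X) := hdom _ hX.neg
        _ ≤ ρ fun _ => 0 := hmono _ _ (.const 0) hX.neg fun ω => neg_nonpos.2 (hX0 ω)
        _ = 0 := hconst 0
    exact neg_nonpos.1 this
  map_one := by
    have upper : L 1 ≤ 1 := (hdom _ (.const 1)).trans_eq (hconst 1)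
    have lower : -L 1 ≤ -1 :=
      calc -L 1 = L (-1) := (hL.map_neg (.const 1)).symm
        _ ≤ ρ (-1) := hdom _ (MemX.const 1).neg
        _ = -1 := hconst (-1)
    exact upper.antisymm (neg_le_neg_iff.1 lower)

namespace IsLinearExpectation

lemma mono (hL : IsLinearExpectation L) (hX : MemX X) (hY : MemX Y) (hXY : ∀ ω, X ω ≤ Y ω) :
    L X ≤ L Y := by
  rw [← sub_nonneg, ← hL.isLinearOp.map_sub hY hX]
  exact hL.nonneg _ (hY.sub hX) fun ω => sub_nonneg.2 (hXY ω)

lemma map_const (hL : IsLinearExpectation L) (c : ℝ) : L (fun _ => c) = c := by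
  have const_eq : (fun _ : Ω => c) = c • 1 := by ext; simp
  rw [const_eq, hL.isLinearOp.2 c 1 (.const 1), hL.map_one, mul_one]

lemma abs_map_le (hL : IsLinearExpectation L) (hX : MemX X) {c : ℝ} (hc : ∀ ω, |X ω| ≤ c) :
    |L X| ≤ c := by
  refine abs_le.2 ⟨?_, ?_⟩
  · simpa only [hL.map_const] using hL.mono (.const (-c)) hX fun ω => (abs_le.1 (hc ω)).1
  · simpa only [hL.map_const] using hL.mono hX (.const c) fun ω => (abs_le.1 (hc ω)).2

lemma eq_of_eq_indicator (hL : IsLinearExpectation L) (hL' : IsLinearExpectation L')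
    (h : ∀ A, MeasurableSet A → L (A.indicator 1) = L' (A.indicator 1)) (hX : MemX X) :
    L X = L' X := by
  refine eq_of_forall_dist_le fun ε hε => ?_
  obtain ⟨f, hf⟩ := hX.exists_simpleFunc_abs_sub_le (half_pos hε)
  have hXf : MemX (X - ⇑f) := hX.sub (.simpleFunc f)
  calc |L X - L' X| = |L (X - ⇑f) - L' (X - ⇑f)| := by
        rw [hL.isLinearOp.map_sub hX (.simpleFunc f), hL'.isLinearOp.map_sub hX (.simpleFunc f),
          hL.isLinearOp.eq_simpleFunc_of_eq_indicator hL'.isLinearOp h f, sub_sub_sub_cancel_right]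
    _ ≤ |L (X - ⇑f)| + |L' (X - ⇑f)| := abs_sub _ _
    _ ≤ ε / 2 + ε / 2 := add_le_add (hL.abs_map_le hXf hf) (hL'.abs_map_le hXf hf)
    _ = ε := add_halves ε

lemma contFromAbove_of_dominated (hL : IsLinearExpectation L) (hdom : Dominated L ρ)
    (hcont : ContFromAbove ρ) : ContFromAbove L := fun X hX hanti hlim =>
  squeeze_zero (fun n => hL.nonneg _ (hX n) fun ω => (hanti ω).le_of_tendsto (hlim ω) n)
    (fun n => hdom _ (hX n)) (hcont X hX hanti hlim)

lemma indicator_nonneg (hL : IsLinearExpectation L) {A : Set Ω} (hA : MeasurableSet A) :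
    0 ≤ L (A.indicator 1) :=
  hL.nonneg _ (.indicator_one hA) fun _ => Set.indicator_nonneg (fun _ _ => zero_le_one) _

end IsLinearExpectation

lemma isSetRing_measurableSet : IsSetRing {A : Set Ω | MeasurableSet A} where
  empty_mem := .empty
  union_mem _ _ := .union
  sdiff_mem _ _ := .diff

lemma exists_measure_eq_addContent (m : AddContent ℝ≥0∞ {A : Set Ω | MeasurableSet A})
    (hfin : ∀ A, MeasurableSet A → m A ≠ ∞)
    (hcont : ∀ ⦃A : ℕ → Set Ω⦄, (∀ n, MeasurableSet (A n)) → Antitone A → ⋂ n, A n = ∅ →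
      Tendsto (fun n => m (A n)) atTop (𝓝 0)) :
    ∃ μ : Measure Ω, ∀ A, MeasurableSet A → μ A = m A :=
  ⟨.ofMeasurable (fun A _ => m A) addContent_empty fun _ hA hdisj =>
    addContent_iUnion_eq_sum_of_tendsto_zero isSetRing_measurableSet m hfin hcont hA
      (.iUnion hA) hdisj,
    fun _ hA => Measure.ofMeasurable_apply _ hA⟩

lemma ContFromAbove.tendsto_indicator (hcont : ContFromAbove ρ) {A : ℕ → Set Ω}
    (hA : ∀ n, MeasurableSet (A n)) (hanti : Antitone A) (hempty : ⋂ n, A n = ∅) :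
    Tendsto (fun n => ρ ((A n).indicator 1)) atTop (𝓝 0) := by
  refine hcont _ (fun n => .indicator_one (hA n)) (fun ω m n hmn => ?_) fun ω => ?_
  · exact Set.indicator_le_indicator_of_subset (hanti hmn) (fun _ => zero_le_one) ω
  · simpa [hempty] using (hanti.tendsto_indicator A (1 : Ω → ℝ) ω).mono_right (pure_le_nhds _)

namespace IsLinearExpectation

/-- The finitely additive probability `A ↦ L(1_A)` on the measurable sets that underlies a linear
expectation `L`, with values coerced to `ℝ≥0∞`. -/
noncomputable def addContent (hL : IsLinearExpectation L) :
    AddContent ℝ≥0∞ {A : Set Ω | MeasurableSet A} :=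
  isSetRing_measurableSet.addContent_of_union (fun A => .ofReal (L (A.indicator 1)))
    (by rw [Set.indicator_empty', hL.isLinearOp.map_zero, ENNReal.ofReal_zero])
    fun hA hB hAB => by
      rw [hL.isLinearOp.map_indicator_union hA hB hAB,
        ENNReal.ofReal_add (hL.indicator_nonneg hA) (hL.indicator_nonneg hB)]

lemma addContent_apply (hL : IsLinearExpectation L) (A : Set Ω) :
    hL.addContent A = .ofReal (L (A.indicator 1)) := rfl

lemma tendsto_addContent (hL : IsLinearExpectation L) (hcont : ContFromAbove L) {A : ℕ → Set Ω}
    (hA : ∀ n, MeasurableSet (A n)) (hanti : Antitone A) (hempty : ⋂ n, A n = ∅) :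
    Tendsto (fun n => hL.addContent (A n)) atTop (𝓝 0) := by
  simpa only [addContent_apply, ENNReal.ofReal_zero] using
    ENNReal.tendsto_ofReal (hcont.tendsto_indicator hA hanti hempty)

theorem exists_eq_integral (hL : IsLinearExpectation L) (hcont : ContFromAbove L) :
    ∃ P : Measure Ω, IsProbabilityMeasure P ∧ ∀ X, MemX X → L X = ∫ ω, X ω ∂P := by
  obtain ⟨P, hP⟩ := exists_measure_eq_addContent hL.addContent
    (fun _ _ => ENNReal.ofReal_ne_top) fun _ => hL.tendsto_addContent hcont
  have hP_prob : IsProbabilityMeasure P :=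
    ⟨by rw [hP _ .univ, addContent_apply, Set.indicator_univ, hL.map_one, ENNReal.ofReal_one]⟩
  have eq_indicator (A : Set Ω) (hA : MeasurableSet A) :
      L (A.indicator 1) = ∫ ω, A.indicator 1 ω ∂P := by
    rw [integral_indicator_one hA, measureReal_def, hP A hA, addContent_apply,
      ENNReal.toReal_ofReal (hL.indicator_nonneg hA)]
  exact ⟨P, hP_prob, fun _ => hL.eq_of_eq_indicator (isLinearExpectation_integral P) eq_indicator⟩

end IsLinearExpectation

end

theorem dominated_linear_is_probability_general {Ω : Type*} [MeasurableSpace Ω]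
    (ρ : (Ω → ℝ) → ℝ) (hmono : ∀ X Y, MemX X → MemX Y → (∀ ω, Y ω ≤ X ω) → ρ Y ≤ ρ X)
    (hconst : ∀ c : ℝ, ρ (fun _ => c) = c) (hcont : ContFromAbove ρ)
    (L : (Ω → ℝ) → ℝ) (hL : IsLinearOp L) (hdom : Dominated L ρ) :
    ∃ P : Measure Ω, IsProbabilityMeasure P ∧ ∀ X, MemX X → L X = ∫ ω, X ω ∂P :=
  have hLexp := hL.isLinearExpectation_of_dominated hdom hmono hconst
  hLexp.exists_eq_integral (hLexp.contFromAbove_of_dominated hdom hcont)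

/-- Lemma 4.?: if a sublinear operator `ρ` on `𝒳` is continuous from above, any
linear functional dominated by `ρ` is represented by a countably additive
probability measure. -/
theorem dominated_linear_is_probability {Ω : Type*} [MeasurableSpace Ω]
    (ρ : (Ω → ℝ) → ℝ) (hρ : IsSublinearOp ρ) (hcont : ContFromAbove ρ)
    (L : (Ω → ℝ) → ℝ) (hL : IsLinearOp L) (hdom : Dominated L ρ) :
    ∃ P : Measure Ω, IsProbabilityMeasure P ∧
      ∀ X : Ω → ℝ, MemX X → L X = ∫ ω, X ω ∂P :=
  dominated_linear_is_probability_general ρ hρ.1 hρ.2.1 hcont L hL hdom
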